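/- arXiv:2407.08900 — 3 statements merged into one kernel-verified Lean document; each statement's English description precedes it below -/
import Mathlib

section
/- Let X and Y be n-dimensional polyhedral real Banach spaces and T : X → Y linear. If T preserves Birkhoff-James orthogonality at an extreme point x of the unit ball B_X, then Tx is a scalar multiple of some extreme point of B_Y. -/
open Module

/-!
An extreme point `x` of a polyhedral ball is exposed by an open set of functionals: the convex hull
of the remaining extreme points is compact and misses `x`, so some `f` strictly separates them, and
every small perturbation `f + δ • g` still attains its maximum over the ball at `x`. Hence the
supporting functionals at `x` separate points (`eq_zero_of_support`).

The case `T x = 0` only needs the ball of `Y` to have an extreme point; suppose `T x ≠ 0`. If a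
nonzero `h` supports the ball at `x`, then `x` is orthogonal to every vector of `ker h`, so `T x` is
orthogonal to every vector of the subspace `T (ker h)`. Hahn-Banach gives a norming functional `g` of `T x` vanishing on
this subspace, so `g ∘ T` is proportional to `h` (`exists_norming_comp`). Since the functionals `h`
separate points, `T` is injective, hence bijective, and the norming functionals of `T x` separate
the points of `Y`. They are all equal to `1` at the endpoints of any segment in the ball having
`T x / ‖T x‖` in its interior, so that normalized vector is extreme.
-/

/-- Birkhoff-James orthogonality. -/
def BirkhoffOrth {E : Type*} [NormedAddCommGroup E] [NormedSpace ℝ E] (u v : E) : Prop :=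
  ∀ t : ℝ, ‖u‖ ≤ ‖u + t • v‖

/-- The supporting functionals at an extreme point of a polyhedral ball separate points. -/
theorem eq_zero_of_support {X : Type*} [NormedAddCommGroup X] [NormedSpace ℝ X]
    [FiniteDimensional ℝ X]
    (hpolyX : (Set.extremePoints ℝ (Metric.closedBall (0 : X) 1)).Finite)
    {x : X} (hx : x ∈ Set.extremePoints ℝ (Metric.closedBall (0 : X) 1)) {z : X}
    (hz : ∀ h : X →L[ℝ] ℝ, (∀ y, h y ≤ h x * ‖y‖) → h z = 0) : z = 0 := by
  have : ProperSpace X := FiniteDimensional.proper_real X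
  set B := Metric.closedBall (0 : X) 1 with hB
  set E := Set.extremePoints ℝ B with hE
  have hfin : (E \ {x}).Finite := hpolyX.subset Set.sdiff_subset
  have hKM : closure (convexHull ℝ E) = B :=
    closure_convexHull_extremePoints (isCompact_closedBall 0 1) (convex_closedBall 0 1)
  have hsub : convexHull ℝ (E \ {x}) ⊆ B :=
    convexHull_min (Set.sdiff_subset.trans extremePoints_subset) (convex_closedBall 0 1)
  have hxC : x ∉ convexHull ℝ (E \ {x}) := by
    intro hmem
    have h1 : x ∈ Set.extremePoints ℝ (convexHull ℝ (E \ {x})) :=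
      inter_extremePoints_subset_extremePoints_of_subset hsub ⟨hmem, hx⟩
    exact (extremePoints_convexHull_subset h1).2 rfl
  obtain ⟨f, u, hfu, hux⟩ := geometric_hahn_banach_closed_point (convex_convexHull ℝ _)
    (hfin.isCompact_convexHull ℝ).isClosed hxC
  -- Being maximal at `x` over the extreme points suffices to be a supporting functional at `x`.
  have key : ∀ h : X →L[ℝ] ℝ, (∀ e ∈ E \ {x}, h e ≤ h x) → h z = 0 := by
    intro h hh
    apply hz
    have hball : B ⊆ {y | h y ≤ h x} := by
      rw [← hKM]
      refine closure_minimal (convexHull_min ?_ ?_) ?_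
      · intro e he
        by_cases hex : e = x
        · simp [hex]
        · exact hh e ⟨he, hex⟩
      · exact convex_halfSpace_le h.toLinearMap.isLinear _
      · exact isClosed_le h.continuous continuous_const
    intro y
    by_cases hy : y = 0
    · simp [hy]
    · have hy' : 0 < ‖y‖ := norm_pos_iff.mpr hy
      have h1 : ‖y‖⁻¹ • y ∈ B := by
        rw [hB, mem_closedBall_zero_iff, norm_smul, norm_inv, norm_norm, inv_mul_cancel₀ hy'.ne']
      have h2 : h (‖y‖⁻¹ • y) ≤ h x := hball h1
      rw [map_smul, smul_eq_mul, inv_mul_le_iff₀ hy'] at h2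
      linarith
  have hlt : ∀ e ∈ E \ {x}, f e < f x := fun e he => (hfu e (subset_convexHull ℝ _ he)).trans hux
  have hfz : f z = 0 := key f fun e he => (hlt e he).le
  refine SeparatingDual.eq_zero_of_forall_dual_eq_zero (R := ℝ) fun g => ?_
  have hev : ∀ᶠ d : ℝ in nhdsWithin 0 (Set.Ioi 0), ∀ e ∈ E \ {x}, f e + d * g e < f x + d * g x := by
    rw [Filter.eventually_all_finite hfin]
    intro e he
    apply Filter.Eventually.filter_mono nhdsWithin_le_nhds
    refine ContinuousAt.eventually_lt (by fun_prop) (by fun_prop) ?_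
    simpa using hlt e he
  obtain ⟨d, hd, hd0⟩ := (hev.and self_mem_nhdsWithin).exists
  have h3 := key (f + d • g) fun e he => by simpa using (hd e he).le
  have hd0' : d ≠ 0 := ne_of_gt hd0
  simpa [hfz, hd0'] using h3

/-- A vector orthogonal to every element of a subspace `S` has a norming functional that
vanishes on `S`: the image of the vector in `Y ⧸ S` has the same norm, and a functional norming that
image can be pulled back. -/
theorem exists_norming_vanishing {Y : Type*} [NormedAddCommGroup Y] [NormedSpace ℝ Y]
    [FiniteDimensional ℝ Y] (S : Submodule ℝ Y) (v : Y) (hv : ∀ y ∈ S, ‖v‖ ≤ ‖v + y‖) :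
    ∃ g : Y →L[ℝ] ℝ, (∀ y, g y ≤ ‖y‖) ∧ g v = ‖v‖ ∧ ∀ y ∈ S, g y = 0 := by
  have : IsClosed (S : Set Y) := S.closed_of_finiteDimensional
  obtain ⟨g, hg1, hg2⟩ := exists_dual_vector'' ℝ (S.mkQ v)
  refine ⟨g.comp S.mkQL, fun y => ?_, ?_, fun y hy => ?_⟩
  · calc g (S.mkQ y) ≤ ‖g (S.mkQ y)‖ := Real.le_norm_self _
      _ ≤ 1 * ‖S.mkQ y‖ := g.le_of_opNorm_le hg1 _
      _ ≤ ‖y‖ := by rw [one_mul]; exact Submodule.Quotient.norm_mk_le S y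
  · change g (S.mkQ v) = ‖v‖
    rw [hg2]
    refine le_antisymm (Submodule.Quotient.norm_mk_le S v) ?_
    refine le_of_forall_pos_le_add fun ε hε => ?_
    obtain ⟨m, hm, hm'⟩ := Submodule.Quotient.norm_mk_lt (S.mkQ v) hε
    have hmem : m - v ∈ S := (Submodule.Quotient.eq S).1 hm
    have := hv _ hmem
    rw [add_sub_cancel] at this
    exact this.trans hm'.le
  · change g (S.mkQ y) = 0
    rw [Submodule.mkQ_apply, (Submodule.Quotient.mk_eq_zero S).2 hy, map_zero]

/-- Up to a scalar, a supporting functional `h` at `x` is the pullback under `T` of a norming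
functional of `T x`. -/
theorem exists_norming_comp {X Y : Type*} [NormedAddCommGroup X] [NormedSpace ℝ X]
    [NormedAddCommGroup Y] [NormedSpace ℝ Y] [FiniteDimensional ℝ Y]
    (T : X →L[ℝ] Y) {x : X} (hx : ‖x‖ ≤ 1)
    (hT : ∀ y : X, BirkhoffOrth x y → BirkhoffOrth (T x) (T y))
    (h : X →L[ℝ] ℝ) (hh : ∀ y, h y ≤ h x * ‖y‖) (hpos : 0 < h x) :
    ∃ g : Y →L[ℝ] ℝ, (∀ y, g y ≤ ‖y‖) ∧ g (T x) = ‖T x‖ ∧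
      ∀ y, g (T y) * h x = ‖T x‖ * h y := by
  obtain ⟨g, hg1, hg2, hg3⟩ := exists_norming_vanishing
    ((LinearMap.ker h.toLinearMap).map T.toLinearMap) (T x) (by
      rintro _ ⟨y, hy, rfl⟩
      have hy0 : h y = 0 := hy
      have horth : BirkhoffOrth x y := by
        intro t
        have h1 := hh (x + t • y)
        rw [map_add, map_smul, hy0, smul_zero, add_zero] at h1
        have h2 : 1 ≤ ‖x + t • y‖ := by
          by_contra hc
          push Not at hc
          nlinarith
        exact hx.trans h2
      simpa using hT y horth 1)
  refine ⟨g, hg1, hg2, fun y => ?_⟩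
  have h3 := hg3 (T (h x • y - h y • x)) ⟨_, by
    change h _ = 0
    simp [mul_comm], rfl⟩
  simp only [map_sub, map_smul, smul_eq_mul, hg2] at h3
  linarith

theorem stmt10 {X Y : Type*} [NormedAddCommGroup X] [NormedSpace ℝ X] [FiniteDimensional ℝ X]
    [NormedAddCommGroup Y] [NormedSpace ℝ Y] [FiniteDimensional ℝ Y]
    {n : ℕ} (hX : finrank ℝ X = n) (hY : finrank ℝ Y = n)
    (hpolyX : (Set.extremePoints ℝ (Metric.closedBall (0 : X) 1)).Finite)
    (hpolyY : (Set.extremePoints ℝ (Metric.closedBall (0 : Y) 1)).Finite)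
    (T : X →L[ℝ] Y) (x : X) (hx : x ∈ Set.extremePoints ℝ (Metric.closedBall (0 : X) 1))
    (hT : ∀ y : X, BirkhoffOrth x y → BirkhoffOrth (T x) (T y)) :
    ∃ (c : ℝ) (w : Y), w ∈ Set.extremePoints ℝ (Metric.closedBall (0 : Y) 1) ∧ T x = c • w := by
  have : ProperSpace Y := FiniteDimensional.proper_real Y
  by_cases hTx : T x = 0
  · obtain ⟨w, hw⟩ := (isCompact_closedBall (0 : Y) 1).extremePoints_nonempty
      ⟨0, Metric.mem_closedBall_self zero_le_one⟩
    exact ⟨0, w, hw, by simp [hTx]⟩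
  have hn : 0 < ‖T x‖ := norm_pos_iff.mpr hTx
  have hx1 : ‖x‖ ≤ 1 := mem_closedBall_zero_iff.1 hx.1
  have hsep : ∀ z, (∀ g : Y →L[ℝ] ℝ, (∀ y, g y ≤ ‖y‖) → g (T x) = ‖T x‖ → g (T z) = 0) →
      z = 0 := by
    intro z hz
    refine eq_zero_of_support hpolyX hx fun h hh => ?_
    have h0 : 0 ≤ h x := by
      have h1 := hh x
      have h2 := hh (-x)
      rw [map_neg, norm_neg] at h2
      by_contra hc
      push Not at hc
      nlinarith [norm_nonneg x]
    rcases h0.eq_or_lt with h0 | h0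
    · have h1 := hh z
      have h2 := hh (-z)
      rw [map_neg] at h2
      rw [← h0, zero_mul] at h1 h2
      linarith
    · obtain ⟨g, hg1, hg2, hg3⟩ := exists_norming_comp T hx1 hT h hh h0
      have h4 := hg3 z
      rw [hz g hg1 hg2, zero_mul] at h4
      exact (mul_eq_zero.1 h4.symm).resolve_left hn.ne'
  have hinj : Function.Injective T.toLinearMap := by
    rw [injective_iff_map_eq_zero]
    intro z hz
    refine hsep z fun g _ _ => ?_
    have hz' : T z = 0 := hz
    rw [hz', map_zero]
  have hsurj : Function.Surjective T.toLinearMap :=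
    (LinearMap.injective_iff_surjective_of_finrank_eq_finrank (hX.trans hY.symm)).1 hinj
  refine ⟨‖T x‖, ‖T x‖⁻¹ • T x, ⟨?_, ?_⟩, by rw [smul_inv_smul₀ hn.ne']⟩
  · rw [mem_closedBall_zero_iff, norm_smul, norm_inv, norm_norm, inv_mul_cancel₀ hn.ne']
  · rintro a ha b hb ⟨s, t, hs, ht, hst, hw⟩
    obtain ⟨z, hz⟩ := hsurj (a - ‖T x‖⁻¹ • T x)
    have hz' : T z = a - ‖T x‖⁻¹ • T x := hz
    have : z = 0 := by
      refine hsep z fun g hg1 hg2 => ?_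
      have ha1 := (hg1 a).trans (mem_closedBall_zero_iff.1 ha)
      have hb1 := (hg1 b).trans (mem_closedBall_zero_iff.1 hb)
      have hgw : g (‖T x‖⁻¹ • T x) = 1 := by
        rw [map_smul, hg2, smul_eq_mul, inv_mul_cancel₀ hn.ne']
      have h5 := congrArg g hw
      rw [hgw, map_add, map_smul, map_smul, smul_eq_mul, smul_eq_mul] at h5
      rw [hz', map_sub, hgw]
      have h6 : 1 ≤ g a := by
        by_contra hc
        push Not at hc
        nlinarith
      linarith
    rw [this, map_zero] at hz'
    exact sub_eq_zero.1 hz'.symm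
end

section
/- Let X and Y be two-dimensional polyhedral real Banach spaces whose unit spheres are 2n-gons. If a nonzero linear operator T : X → Y preserves Birkhoff-James orthogonality at each extreme point of B_X, then T maps any two consecutive extreme points of B_X to scalar multiples of two consecutive extreme points of B_Y. -/
/-!
In a plane, a unit vector `v` is a vertex of the unit ball as soon as its Birkhoff-James
orthogonal set contains two different lines, and for polygonal balls this condition is also
necessary. Both facts are used in the following form: there is `e` with `v ⊥ v + e` and `v ⊥ v - e`
(such an `e` is automatically not parallel to `v`).

* If `x` is a vertex of a polygonal ball, a functional `f` strictly exposing `x` can be perturbed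
  to `f ± ε g` with `g x = 0`, and the kernels of these two norming functionals give `e`
  (`exists_orth_pair`).
* Conversely, `v ⊥ v ± e` forces `v` to be extreme (`extreme_of_orth_pair`): a direction in which
  `v` could be moved both ways inside the ball would be the only direction orthogonal to `v`.

Consequently `T`, being nonzero and preserving these relations, is injective, and `x ↦ T x / ‖T x‖`
maps the vertices of `B_X` injectively to those of `B_Y`; since there are `2n` of each, it is
a bijection. If the images `u'`, `w'` of consecutive vertices `u`, `w` did not span an edge, then
`B_Y` would have a vertex in the open cone generated by `u'` and `w'` (`exists_extreme_in_cone`).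
Its preimage would be a vertex of `B_X` in the open cone generated by `u` and `w`, that is, in the
open edge between `u` and `w`, which is impossible.
-/

open Module

/-- Two consecutive extreme points of the unit ball: endpoints of a common edge of the
unit sphere. -/
def ConsecutiveExtreme {E : Type*} [NormedAddCommGroup E] [NormedSpace ℝ E] (u w : E) : Prop :=
  u ∈ Set.extremePoints ℝ (Metric.closedBall (0 : E) 1) ∧
  w ∈ Set.extremePoints ℝ (Metric.closedBall (0 : E) 1) ∧
  u ≠ w ∧ segment ℝ u w ⊆ Metric.sphere (0 : E) 1

/-! ### Functionals and coordinates in the plane -/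

/-- By Krein-Milman, a functional bounded by `1` at the extreme points of the unit ball is bounded
by the norm. -/
lemma le_norm_of_le_on_extreme {E : Type*} [NormedAddCommGroup E] [NormedSpace ℝ E]
    [FiniteDimensional ℝ E] (F : E →L[ℝ] ℝ)
    (hF : ∀ k ∈ Set.extremePoints ℝ (Metric.closedBall (0 : E) 1), F k ≤ 1) (z : E) :
    F z ≤ ‖z‖ := by
  have hball : Metric.closedBall (0 : E) 1 ⊆ {y | F y ≤ 1} := by
    rw [← closure_convexHull_extremePoints (isCompact_closedBall (0 : E) 1)
      (convex_closedBall (0 : E) 1)]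
    refine closure_minimal (convexHull_min hF ?_) ?_
    · exact convex_halfSpace_le F.toLinearMap.isLinear 1
    · exact isClosed_le F.continuous continuous_const
  by_cases hz : z = 0
  · simp [hz]
  have hn : 0 < ‖z‖ := norm_pos_iff.2 hz
  have h1 : F (‖z‖⁻¹ • z) ≤ 1 := by
    apply hball
    simp [norm_smul, hn.ne']
  rw [map_smul, smul_eq_mul, inv_mul_le_iff₀ hn] at h1
  linarith

lemma exists_comb {E : Type*} [NormedAddCommGroup E] [NormedSpace ℝ E]
    (hE : finrank ℝ E = 2) {a b : E} (h : LinearIndependent ℝ ![a, b]) (z : E) :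
    ∃ p q : ℝ, z = p • a + q • b := by
  have hspan := h.span_eq_top_of_card_eq_finrank (by simp [hE])
  have hz : z ∈ Submodule.span ℝ (Set.range ![a, b]) := hspan ▸ Submodule.mem_top
  simp only [Matrix.range_cons, Matrix.range_empty, Set.union_empty] at hz
  rw [Set.singleton_union, Submodule.mem_span_pair] at hz
  obtain ⟨p, q, h⟩ := hz
  exact ⟨p, q, h.symm⟩

/-- In the plane, a functional with prescribed values on a basis. -/
lemma exists_functional {E : Type*} [NormedAddCommGroup E] [NormedSpace ℝ E]
    [FiniteDimensional ℝ E] (hE : finrank ℝ E = 2) {a b : E} (h : LinearIndependent ℝ ![a, b])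
    (r s : ℝ) : ∃ F : E →L[ℝ] ℝ, F a = r ∧ F b = s := by
  let B := basisOfLinearIndependentOfCardEqFinrank h (by simp [hE])
  have hB : ⇑B = ![a, b] := coe_basisOfLinearIndependentOfCardEqFinrank h _
  refine ⟨LinearMap.toContinuousLinearMap (B.constr ℝ ![r, s]), ?_, ?_⟩
  · have := B.constr_basis ℝ ![r, s] 0
    simpa [hB] using this
  · have := B.constr_basis ℝ ![r, s] 1
    simpa [hB] using this

/-! ### Orthogonality at extreme points -/

lemma BirkhoffOrth.smul {E : Type*} [NormedAddCommGroup E] [NormedSpace ℝ E] {u v : E}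
    (h : BirkhoffOrth u v) (c : ℝ) : BirkhoffOrth (c • u) (c • v) := by
  intro t
  rw [smul_comm t c v, ← smul_add, norm_smul, norm_smul]
  exact mul_le_mul_of_nonneg_left (h t) (norm_nonneg c)

lemma extreme_ne_zero {E : Type*} [NormedAddCommGroup E] [NormedSpace ℝ E] [Nontrivial E] {x : E}
    (hx : x ∈ Set.extremePoints ℝ (Metric.closedBall (0 : E) 1)) : x ≠ 0 := by
  rintro rfl
  obtain ⟨y, hy⟩ := exists_norm_eq E (zero_le_one)
  rw [mem_extremePoints] at hx
  have := (hx.2 y (by simp [hy]) (-y) (by simp [hy])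
    ⟨1 / 2, 1 / 2, by norm_num, by norm_num, by norm_num, by simp⟩).1
  simp [this] at hy

/-- A vertex `x` of a polygonal unit ball is a unit vector, and is orthogonal to two different
lines, spanned by `x + e` and `x - e`. -/
lemma exists_orth_pair {E : Type*} [NormedAddCommGroup E] [NormedSpace ℝ E]
    [FiniteDimensional ℝ E] (hE : finrank ℝ E = 2)
    (hfin : (Set.extremePoints ℝ (Metric.closedBall (0 : E) 1)).Finite) {x : E}
    (hx : x ∈ Set.extremePoints ℝ (Metric.closedBall (0 : E) 1)) :
    ‖x‖ = 1 ∧ ∃ e : E, BirkhoffOrth x (x + e) ∧ BirkhoffOrth x (x - e) := by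
  have : Nontrivial E := Module.nontrivial_of_finrank_pos (R := ℝ) (by omega)
  have hx0 := extreme_ne_zero hx
  have hx1 : ‖x‖ ≤ 1 := by simpa using hx.1
  set S := Set.extremePoints ℝ (Metric.closedBall (0 : E) 1) with hS
  have hxK : x ∉ convexHull ℝ (S \ {x}) := by
    have h := ((convex_closedBall (0 : E) 1).mem_extremePoints_iff_mem_sdiff_convexHull_sdiff).1 hx
    exact fun h' => h.2 (convexHull_mono (Set.sdiff_subset_sdiff_left extremePoints_subset) h')
  have hclosed : IsClosed (convexHull ℝ (S \ {x})) :=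
    ((hfin.subset Set.sdiff_subset).isCompact_convexHull (𝕜 := ℝ)).isClosed
  obtain ⟨f₀, s, hs, hfx⟩ := geometric_hahn_banach_closed_point (convex_convexHull ℝ _) hclosed hxK
  have hneg : -x ∈ S := by
    rw [hS, mem_extremePoints]
    refine ⟨by simpa using hx1, fun a ha b hb hab => ?_⟩
    rw [hS, mem_extremePoints] at hx
    have h2 := hx.2 (-a) (by simpa using ha) (-b) (by simpa using hb) (by
      obtain ⟨p, q, hp, hq, hpq, h⟩ := hab
      exact ⟨p, q, hp, hq, hpq, by rw [smul_neg, smul_neg, ← neg_add, h, neg_neg]⟩)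
    exact ⟨by rw [← h2.1, neg_neg], by rw [← h2.2, neg_neg]⟩
  have hlt : ∀ k ∈ S, k ≠ x → f₀ k < f₀ x := fun k hk hkx =>
    (hs k (subset_convexHull ℝ _ ⟨hk, hkx⟩)).trans hfx
  have hpos : 0 < f₀ x := by
    have hne : -x ≠ x := fun h => hx0 <| by
      have h2 : (2 : ℝ) • x = 0 := by rw [two_smul, ← sub_neg_eq_add, h, sub_self]
      simpa using h2
    have := hlt _ hneg hne
    rw [map_neg] at this
    linarith
  -- normalise so that `f x = 1`
  obtain ⟨f, hf1, hfk⟩ : ∃ f : E →L[ℝ] ℝ, f x = 1 ∧ ∀ k ∈ S, k ≠ x → f k < 1 := by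
    refine ⟨(f₀ x)⁻¹ • f₀, by simp [hpos.ne'], fun k hk hkx => ?_⟩
    have := hlt k hk hkx
    simp only [smul_apply, smul_eq_mul]
    rw [inv_mul_lt_iff₀ hpos]
    linarith
  obtain ⟨y, hxy⟩ := exists_linearIndependent_pair_of_one_lt_finrank (R := ℝ) (by omega) hx0
  obtain ⟨g, hgx, hgy⟩ := exists_functional hE hxy 0 1
  obtain ⟨ε, hε, hεk⟩ : ∃ ε : ℝ, 0 < ε ∧ ∀ k ∈ S, f k + ε * |g k| ≤ 1 := by
    have hev : ∀ᶠ ε in nhdsWithin (0 : ℝ) (Set.Ioi 0), ∀ k ∈ S, f k + ε * |g k| ≤ 1 := by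
      rw [Filter.eventually_all_finite hfin]
      intro k hk
      by_cases hkx : k = x
      · simp [hkx, hf1, hgx]
      · have hc : Filter.Tendsto (fun ε : ℝ => f k + ε * |g k|) (nhdsWithin 0 (Set.Ioi 0))
            (nhds (f k + 0 * |g k|)) :=
          (Continuous.tendsto (by fun_prop) (0 : ℝ)).mono_left nhdsWithin_le_nhds
        have := hc.eventually_lt_const (u := 1) (by simpa using hfk k hk hkx)
        exact this.mono fun _ h => h.le
    obtain ⟨ε, h1, h2⟩ := (hev.and self_mem_nhdsWithin).exists
    exact ⟨ε, h2, h1⟩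
  have hplus : ∀ z, f z + ε * g z ≤ ‖z‖ := by
    intro z
    have := le_norm_of_le_on_extreme (f + ε • g) (fun k hk => by
      have := hεk k hk
      have := mul_le_mul_of_nonneg_left (le_abs_self (g k)) hε.le
      simp only [add_apply, smul_apply, smul_eq_mul]
      linarith) z
    simpa using this
  have hminus : ∀ z, f z - ε * g z ≤ ‖z‖ := by
    intro z
    have := le_norm_of_le_on_extreme (f - ε • g) (fun k hk => by
      have := hεk k hk
      have := mul_le_mul_of_nonneg_left (neg_abs_le (g k)) hε.le
      simp only [sub_apply, smul_apply, smul_eq_mul]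
      linarith) z
    simpa using this
  refine ⟨le_antisymm hx1 (by simpa [hf1, hgx] using hplus x), ?_⟩
  -- `x + e` and `x - e` span the kernels of `f + ε g` and `f - ε g`
  refine ⟨ε⁻¹ • (f y • x - y), fun t => hx1.trans ?_, fun t => hx1.trans ?_⟩
  · have h := hplus (x + t • (x + ε⁻¹ • (f y • x - y)))
    simp only [map_add, map_sub, map_smul, smul_eq_mul, hf1, hgx, hgy] at h
    have h3 : ε * ε⁻¹ = 1 := mul_inv_cancel₀ hε.ne'
    linear_combination h + t * h3
  · have h := hminus (x + t • (x - ε⁻¹ • (f y • x - y)))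
    simp only [map_add, map_sub, map_smul, smul_eq_mul, hf1, hgx, hgy] at h
    have h3 : ε * ε⁻¹ = 1 := mul_inv_cancel₀ hε.ne'
    linear_combination h + t * h3

lemma linearIndependent_of_orth_pair {E : Type*} [NormedAddCommGroup E] [NormedSpace ℝ E]
    {v e : E} (hv : v ≠ 0) (h1 : BirkhoffOrth v (v + e)) (h2 : BirkhoffOrth v (v - e)) :
    LinearIndependent ℝ ![v, e] := by
  rw [LinearIndependent.pair_iff' hv]
  intro l hl
  have key : ∀ c : ℝ, BirkhoffOrth v (c • v) → c = 0 := by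
    intro c hc
    by_contra hc0
    have h := hc (-c⁻¹)
    rw [smul_smul, neg_mul, inv_mul_cancel₀ hc0, neg_one_smul, add_neg_cancel, norm_zero] at h
    exact hv (norm_le_zero_iff.1 h)
  have e1 := key (1 + l) (by rwa [add_smul, one_smul, hl])
  have e2 := key (1 - l) (by rwa [sub_smul, one_smul, hl])
  linarith

/-- If `v` can be moved inside the unit ball both ways in the direction `d`, then a vector
orthogonal to `v` has no `v`-component in the coordinates `(v, d)`. -/
lemma coeff_eq_zero_of_orth {E : Type*} [NormedAddCommGroup E] [NormedSpace ℝ E]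
    {v d : E} (hv : ‖v‖ = 1) {δ : ℝ} (hδ : 0 < δ) (hd : ∀ s : ℝ, |s| ≤ δ → ‖v + s • d‖ ≤ 1)
    {P q : ℝ} (h : BirkhoffOrth v (P • v + q • d)) : P = 0 := by
  by_contra hP
  have hP2 : 0 < P ^ 2 := by positivity
  -- a small `η` for which `v - (η P) (P v + q d)` has norm at most `1 - η P² < 1`
  obtain ⟨η, hη, h1, h2⟩ : ∃ η : ℝ, 0 < η ∧ 0 < 1 - η * P ^ 2 ∧
      η * (|P| * |q|) < δ * (1 - η * P ^ 2) := by
    have hc1 : Filter.Tendsto (fun η : ℝ => 1 - η * P ^ 2) (nhdsWithin 0 (Set.Ioi 0))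
        (nhds (1 - 0 * P ^ 2)) :=
      (Continuous.tendsto (by fun_prop) (0 : ℝ)).mono_left nhdsWithin_le_nhds
    have hc2 : Filter.Tendsto (fun η : ℝ => δ * (1 - η * P ^ 2) - η * (|P| * |q|))
        (nhdsWithin 0 (Set.Ioi 0)) (nhds (δ * (1 - 0 * P ^ 2) - 0 * (|P| * |q|))) :=
      (Continuous.tendsto (by fun_prop) (0 : ℝ)).mono_left nhdsWithin_le_nhds
    have e1 := hc1.eventually_const_lt (u := 0) (by simp)
    have e2 := hc2.eventually_const_lt (u := 0) (by simpa using hδ)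
    obtain ⟨η, ⟨h1, h2⟩, h3⟩ := ((e1.and e2).and self_mem_nhdsWithin).exists
    exact ⟨η, h3, h1, by linarith⟩
  have h3 := h (-(η * P))
  have h4 := hd (-(η * P) * q / (1 - η * P ^ 2)) (by
    rw [abs_div, abs_of_pos h1, div_le_iff₀ h1, abs_mul, abs_neg, abs_mul, abs_of_pos hη]
    linarith)
  have h5 : v + (-(η * P)) • (P • v + q • d)
      = (1 - η * P ^ 2) • (v + (-(η * P) * q / (1 - η * P ^ 2)) • d) := by
    rw [smul_add (1 - η * P ^ 2), smul_smul (1 - η * P ^ 2), mul_div_cancel₀ _ h1.ne']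
    module
  rw [h5, norm_smul, hv, Real.norm_of_nonneg h1.le] at h3
  have := mul_le_mul_of_nonneg_left h4 h1.le
  have := mul_pos hη hP2
  linarith

/-- Converse of `exists_orth_pair`, valid for any norm on the plane: a unit vector orthogonal to two
different lines is an extreme point. -/
lemma extreme_of_orth_pair {E : Type*} [NormedAddCommGroup E] [NormedSpace ℝ E]
    (hE : finrank ℝ E = 2) {v e : E} (hv : ‖v‖ = 1)
    (h1 : BirkhoffOrth v (v + e)) (h2 : BirkhoffOrth v (v - e)) :
    v ∈ Set.extremePoints ℝ (Metric.closedBall (0 : E) 1) := by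
  have hv0 : v ≠ 0 := by rintro rfl; simp at hv
  refine mem_extremePoints_iff_left.2 ⟨by simp [hv], fun a ha b hb hab => ?_⟩
  obtain ⟨α, β, hα, hβ, hαβ, hvab⟩ := hab
  by_contra hne
  have hδ : 0 < min α β := lt_min hα hβ
  have hd : ∀ s : ℝ, |s| ≤ min α β → ‖v + s • (b - a)‖ ≤ 1 := by
    intro s hs
    obtain ⟨hsl, hsu⟩ := abs_le.1 hs
    have m1 := min_le_left α β
    have m2 := min_le_right α β
    have := (convex_closedBall (0 : E) 1) ha hb (a := α - s) (b := β + s) (by linarith)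
      (by linarith) (by linarith)
    rw [mem_closedBall_zero_iff] at this
    have e1 : v + s • (b - a) = (α - s) • a + (β + s) • b := by
      rw [← hvab]
      module
    rwa [e1]
  have hind : LinearIndependent ℝ ![v, b - a] := by
    rw [LinearIndependent.pair_iff' hv0]
    intro l hl
    by_cases hl0 : l = 0
    · rw [hl0, zero_smul] at hl
      apply hne
      have hba : b = a := (sub_eq_zero.1 hl.symm)
      rw [← hvab, hba, ← add_smul, hαβ, one_smul]
    · -- moving the unit vector `v` both ways along its own line would leave the ball
      have hm := hd (min α β) (abs_of_pos hδ).le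
      have hm' := hd (-min α β) (by rw [abs_neg, abs_of_pos hδ])
      rw [← hl] at hm hm'
      have e1 : v + min α β • l • v = (1 + min α β * l) • v := by module
      have e2 : v + (-min α β) • l • v = (1 - min α β * l) • v := by module
      rw [e1, norm_smul, hv, mul_one, Real.norm_eq_abs, abs_le] at hm
      rw [e2, norm_smul, hv, mul_one, Real.norm_eq_abs, abs_le] at hm'
      have h0 : min α β * l = 0 := by linarith
      rcases mul_eq_zero.1 h0 with h | h
      · exact hδ.ne' h
      · exact hl0 h
  obtain ⟨p, q, he⟩ := exists_comb hE hind e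
  have k1 : 1 + p = 0 := coeff_eq_zero_of_orth hv hδ hd (q := q) (by
    convert h1 using 1; rw [he]; module)
  have k2 : 1 - p = 0 := coeff_eq_zero_of_orth hv hδ hd (q := -q) (by
    convert h2 using 1; rw [he]; module)
  linarith

/-! ### Edges and open cones -/

/-- If the chord between two unit vectors of the plane leaves the unit sphere, then the open cone
they generate contains an extreme point of the unit ball. -/
lemma exists_extreme_in_cone {E : Type*} [NormedAddCommGroup E] [NormedSpace ℝ E]
    [FiniteDimensional ℝ E] (hE : finrank ℝ E = 2) {u w : E} (hu : ‖u‖ = 1) (hw : ‖w‖ = 1)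
    (hind : LinearIndependent ℝ ![u, w]) (hseg : ¬ segment ℝ u w ⊆ Metric.sphere (0 : E) 1) :
    ∃ z ∈ Set.extremePoints ℝ (Metric.closedBall (0 : E) 1), ∃ a b : ℝ,
      0 < a ∧ 0 < b ∧ z = a • u + b • w := by
  obtain ⟨p, hp, hps⟩ := Set.not_subset.1 hseg
  have hple : ‖p‖ ≤ 1 := by
    have := (convex_closedBall (0 : E) 1).segment_subset (by simp [hu]) (by simp [hw]) hp
    simpa using this
  have hplt : ‖p‖ < 1 := lt_of_le_of_ne hple (by simpa using hps)
  obtain ⟨f, hfu, hfw⟩ := exists_functional hE hind 1 1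
  have hfp : f p = 1 := by
    obtain ⟨α, β, -, -, hαβ, rfl⟩ := hp
    simp [hfu, hfw, hαβ]
  obtain ⟨z, hz, hfz⟩ : ∃ z ∈ Set.extremePoints ℝ (Metric.closedBall (0 : E) 1), 1 < f z := by
    by_contra! hcon
    have := le_norm_of_le_on_extreme f hcon p
    linarith
  have hz1 : ‖z‖ ≤ 1 := by simpa using hz.1
  obtain ⟨a, b, hzab⟩ := exists_comb hE hind z
  have hab : 1 < a + b := by simpa [hzab, hfu, hfw] using hfz
  -- otherwise one of `u`, `w` is a combination of `z` and the other of total weight below `1`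
  have key : ∀ (a b : ℝ) (u w : E), ‖u‖ = 1 → ‖w‖ = 1 → z = a • u + b • w → 1 < a + b →
      0 < a := by
    intro a b u w hu hw hz' hab
    by_contra! ha
    have hbw : b • w = z - a • u := by rw [hz']; abel
    have h1 : ‖b • w‖ ≤ ‖z‖ + ‖a • u‖ := hbw ▸ norm_sub_le _ _
    rw [norm_smul, norm_smul, hu, hw, Real.norm_of_nonpos ha,
      Real.norm_of_nonneg (by linarith)] at h1
    linarith
  exact ⟨z, hz, a, b, key a b u w hu hw hzab hab,
    key b a w u hw hu (by rw [hzab, add_comm]) (by linarith), hzab⟩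

lemma linearIndependent_of_consecutive {E : Type*} [NormedAddCommGroup E] [NormedSpace ℝ E]
    {u w : E} (hne : u ≠ w) (hseg : segment ℝ u w ⊆ Metric.sphere (0 : E) 1) :
    LinearIndependent ℝ ![u, w] := by
  have hu : ‖u‖ = 1 := by simpa using hseg (left_mem_segment ℝ u w)
  have hw : ‖w‖ = 1 := by simpa using hseg (right_mem_segment ℝ u w)
  have hu0 : u ≠ 0 := by rintro rfl; simp at hu
  rw [LinearIndependent.pair_iff' hu0]
  intro l hl
  have hl1 : |l| = 1 := by
    rw [← hl, norm_smul, hu, mul_one] at hw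
    exact hw
  rcases (abs_eq zero_le_one).1 hl1 with h | h
  · exact hne (by rw [← hl, h, one_smul])
  · have h0 : (0 : E) ∈ segment ℝ u w :=
      ⟨1 / 2, 1 / 2, by norm_num, by norm_num, by norm_num, by rw [← hl, h]; module⟩
    simpa using hseg h0

/-! ### Operators preserving orthogonality at the extreme points -/

theorem stmt14 {X Y : Type*} [NormedAddCommGroup X] [NormedSpace ℝ X] [FiniteDimensional ℝ X]
    [NormedAddCommGroup Y] [NormedSpace ℝ Y] [FiniteDimensional ℝ Y]
    (hX : finrank ℝ X = 2) (hY : finrank ℝ Y = 2) {n : ℕ}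
    (hpolyX : (Set.extremePoints ℝ (Metric.closedBall (0 : X) 1)).Finite)
    (hpolyY : (Set.extremePoints ℝ (Metric.closedBall (0 : Y) 1)).Finite)
    (hcardX : (Set.extremePoints ℝ (Metric.closedBall (0 : X) 1)).ncard = 2 * n)
    (hcardY : (Set.extremePoints ℝ (Metric.closedBall (0 : Y) 1)).ncard = 2 * n)
    (T : X →L[ℝ] Y) (hT0 : T ≠ 0)
    (hT : ∀ x ∈ Set.extremePoints ℝ (Metric.closedBall (0 : X) 1),
      ∀ y : X, BirkhoffOrth x y → BirkhoffOrth (T x) (T y)) :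
    ∀ u w : X, ConsecutiveExtreme u w →
      ∃ (a b : ℝ) (u' w' : Y), ConsecutiveExtreme u' w' ∧ T u = a • u' ∧ T w = b • w' := by
  have : Nontrivial X := Module.nontrivial_of_finrank_pos (R := ℝ) (by omega)
  -- the extreme points are total, so `T` is nonzero at one of them, say `x₀`
  obtain ⟨x₀, hx₀, hTx₀⟩ :
      ∃ x ∈ Set.extremePoints ℝ (Metric.closedBall (0 : X) 1), T x ≠ 0 := by
    by_contra! hcon
    apply hT0
    have hle : ∀ z : X, T z = 0 := by
      intro z
      by_contra hz
      obtain ⟨φ, -, hφ⟩ := exists_dual_vector ℝ (T z) (norm_ne_zero_iff.2 hz)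
      have h1 : ∀ c : ℝ, c * φ (T z) ≤ ‖z‖ := fun c => by
        have := le_norm_of_le_on_extreme (c • (φ.comp T)) (fun k hk => by simp [hcon k hk]) z
        simpa using this
      have hpos : 0 < ‖T z‖ := norm_pos_iff.2 hz
      have h2 := h1 ((‖z‖ + 1) / ‖T z‖)
      rw [hφ] at h2
      simp only [RCLike.ofReal_real_eq_id, id_eq] at h2
      rw [div_mul_cancel₀ _ hpos.ne'] at h2
      linarith
    ext z
    simpa using hle z
  have hinj : ∀ z : X, T z = 0 → z = 0 := by
    obtain ⟨-, e, he1, he2⟩ := exists_orth_pair hX hpolyX hx₀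
    have k1 := hT x₀ hx₀ _ he1
    have k2 := hT x₀ hx₀ _ he2
    rw [map_add] at k1
    rw [map_sub] at k2
    have hi := linearIndependent_of_orth_pair (extreme_ne_zero hx₀) he1 he2
    have hi' := linearIndependent_of_orth_pair hTx₀ k1 k2
    intro z hz
    obtain ⟨p, q, rfl⟩ := exists_comb hX hi z
    rw [map_add, map_smul, map_smul] at hz
    obtain ⟨rfl, rfl⟩ := LinearIndependent.pair_iff.1 hi' p q hz
    simp
  have hTinj : Function.Injective T := (injective_iff_map_eq_zero T).2 hinj
  have hTpos : ∀ x ∈ Set.extremePoints ℝ (Metric.closedBall (0 : X) 1), 0 < ‖T x‖ :=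
    fun x hx => norm_pos_iff.2 fun h => extreme_ne_zero hx (hinj x h)
  have hmaps : ∀ x ∈ Set.extremePoints ℝ (Metric.closedBall (0 : X) 1),
      ‖T x‖⁻¹ • T x ∈ Set.extremePoints ℝ (Metric.closedBall (0 : Y) 1) := by
    intro x hx
    obtain ⟨-, e, he1, he2⟩ := exists_orth_pair hX hpolyX hx
    have k1 := (hT x hx _ he1).smul ‖T x‖⁻¹
    have k2 := (hT x hx _ he2).smul ‖T x‖⁻¹
    rw [map_add, smul_add] at k1
    rw [map_sub, smul_sub] at k2
    exact extreme_of_orth_pair hY (by simp [norm_smul, (hTpos x hx).ne']) k1 k2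
  have hnorm : ∀ x ∈ Set.extremePoints ℝ (Metric.closedBall (0 : X) 1), ‖x‖ = 1 :=
    fun x hx => (exists_orth_pair hX hpolyX hx).1
  have hinjOn : Set.InjOn (fun x => ‖T x‖⁻¹ • T x)
      (Set.extremePoints ℝ (Metric.closedBall (0 : X) 1)) := by
    intro x hx y hy hxy
    have h1 : ‖T x‖⁻¹ • x = ‖T y‖⁻¹ • y := hTinj (by simpa using hxy)
    have h2 := congrArg norm h1
    rw [norm_smul, norm_smul, hnorm x hx, hnorm y hy, norm_inv, norm_inv, norm_norm, norm_norm,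
      mul_one, mul_one] at h2
    rw [h2] at h1
    exact smul_right_injective X (inv_ne_zero (hTpos y hy).ne') h1
  have himage : (fun x => ‖T x‖⁻¹ • T x) '' Set.extremePoints ℝ (Metric.closedBall (0 : X) 1)
      = Set.extremePoints ℝ (Metric.closedBall (0 : Y) 1) := by
    refine Set.eq_of_subset_of_ncard_le (Set.image_subset_iff.2 hmaps) ?_ hpolyY
    rw [hinjOn.ncard_image, hcardX, hcardY]
  rintro u w ⟨hu, hw, hne, hseg⟩
  have hpu := hTpos u hu
  have hpw := hTpos w hw
  have hind := linearIndependent_of_consecutive hne hseg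
  have hind' : LinearIndependent ℝ ![‖T u‖⁻¹ • T u, ‖T w‖⁻¹ • T w] := by
    rw [LinearIndependent.pair_iff]
    intro s t hst
    have h0 : (s * ‖T u‖⁻¹) • u + (t * ‖T w‖⁻¹) • w = 0 := by
      apply hinj
      rw [map_add, map_smul, map_smul, mul_smul, mul_smul, hst]
    obtain ⟨h1, h2⟩ := LinearIndependent.pair_iff.1 hind _ _ h0
    simpa [hpu.ne', hpw.ne', mul_eq_zero] using And.intro h1 h2
  refine ⟨‖T u‖, ‖T w‖, ‖T u‖⁻¹ • T u, ‖T w‖⁻¹ • T w,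
    ⟨hmaps u hu, hmaps w hw, fun h => hne (hinjOn hu hw h), ?_⟩,
    (smul_inv_smul₀ hpu.ne' _).symm, (smul_inv_smul₀ hpw.ne' _).symm⟩
  by_contra hcon
  obtain ⟨z', hz', a, b, ha, hb, hzab⟩ := exists_extreme_in_cone hY
    (by simp [norm_smul, hpu.ne']) (by simp [norm_smul, hpw.ne']) hind' hcon
  rw [← himage] at hz'
  obtain ⟨z, hz, rfl⟩ := hz'
  have hpz := hTpos z hz
  obtain ⟨A, B, hA, hB, hzAB⟩ : ∃ A B : ℝ, 0 < A ∧ 0 < B ∧ z = A • u + B • w := by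
    refine ⟨‖T z‖ * (a * ‖T u‖⁻¹), ‖T z‖ * (b * ‖T w‖⁻¹), by positivity, by positivity, hTinj ?_⟩
    have := congrArg (fun y => ‖T z‖ • y) hzab
    simp only [smul_inv_smul₀ hpz.ne'] at this
    refine this.trans ?_
    rw [map_add, map_smul, map_smul]
    module
  have hAB : 0 < A + B := add_pos hA hB
  -- the point where the ray through `z` meets the edge has norm `1`, hence is `z`
  have hmem : (A + B)⁻¹ • z ∈ segment ℝ u w := by
    refine ⟨(A + B)⁻¹ * A, (A + B)⁻¹ * B, by positivity, by positivity, ?_, ?_⟩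
    · rw [← mul_add, inv_mul_cancel₀ hAB.ne']
    · rw [hzAB]; module
  have hsum : A + B = 1 := by
    have h := hseg hmem
    rw [mem_sphere_zero_iff_norm, norm_smul, hnorm z hz, mul_one,
      Real.norm_of_nonneg (inv_nonneg.2 hAB.le), inv_eq_one] at h
    exact h
  have hext := (mem_extremePoints.1 hz).2 u hu.1 w hw.1 ⟨A, B, hA, hB, hsum, hzAB.symm⟩
  exact hne (hext.1.trans hext.2.symm)
end

section
/- Let X be the two-dimensional real Banach space whose unit sphere is the regular 2n-gon with vertices v_j = (cos((j-1)π/n), sin((j-1)π/n)), 1 ≤ j ≤ 2n. If a linear operator T on X preserves Birkhoff-James orthogonality at two consecutive vertices v_i, v_{i+1} of the unit sphere, then T is a scalar multiple of an isometry. -/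
/-!
Write `θ = π / n` and let `V k` (`k ∈ ℤ`) be the vertex of angle `k θ`, so `V` is `2n`-periodic.
Let `f k` be the functional which equals `1` on the edge `[V k, V (k+1)]`. Then `f k x ≤ ‖x‖`, every
`x` lies in some cone spanned by `V k` and `V (k+1)`, and on that cone the norm is `f k`.

Put `P = T (V i)`, `Q = T (V (i+1))`. Both `V i` and `V (i+1)` are orthogonal to
`d = V (i+1) - V i`, so `P` and `Q` are orthogonal to `Q - P`. Hence `‖P‖ = ‖Q‖ =: r` and the
midpoint of `[P, Q]` has norm at least `r`, so `P` and `Q` lie on a common edge `m` of the sphere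
of radius `r`. If `r ≠ 0`, then `P` is moreover a multiple of a vertex: the vertex `V i` is
orthogonal to the directions of both adjacent edges, whereas a point inside an edge cone `k` is
orthogonal only to `ker (f k)`; that would force `f k P = 0`, because `V i` is a combination of the
two directions (`IsPolygonFrame.vertex_of_orth`). The same applies to `Q`, and `P ≠ Q` for a similar
reason, so `{P, Q} = {r V m, r V (m+1)}`. By the recurrence
`V (k+1) + V (k-1) = 2 cos θ • V k`, `T` maps the whole sequence of vertices to `r` times a shift or
a reflection of it. Cones over edges go to cones over edges, and `‖T x‖ = r ‖x‖`.
-/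

open Module Real

/-! ### Polygonal norms and orthogonality -/

/-- The features of a regular polygonal norm used in the argument: `V` enumerates the vertices
consecutively (periodically over `ℤ`), `f k` is the norming functional of the edge from `V k` to
`V (k + 1)`, and `c` is `2 cos θ`, with `θ` the angle between consecutive vertices. -/
structure IsPolygonFrame {X : Type*} [NormedAddCommGroup X] [NormedSpace ℝ X]
    (V : ℤ → X) (f : ℤ → X →ₗ[ℝ] ℝ) (c : ℝ) : Prop where
  c_ne : c ≠ 2
  recur : ∀ k, V (k + 1) + V (k - 1) = c • V k
  f_left : ∀ k, f k (V k) = 1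
  f_right : ∀ k, f k (V (k + 1)) = 1
  f_le : ∀ k x, f k x ≤ ‖x‖
  norm_le : ∀ k, ‖V k‖ ≤ 1
  span : ∀ k x, ∃ a b : ℝ, x = a • V k + b • V (k + 1)
  cone : ∀ x, ∃ (k : ℤ) (a b : ℝ), 0 ≤ a ∧ 0 ≤ b ∧ x = a • V k + b • V (k + 1)
  face : ∀ m j, f m (V j) = 1 → V j = V m ∨ V j = V (m + 1)

/-- A two-sided sequence satisfying a second order recurrence is determined by two consecutive
terms. -/
lemma eq_of_recur {X : Type*} [AddCommGroup X] [Module ℝ X] {c : ℝ} {A B : ℤ → X}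
    (hA : ∀ k, A (k + 1) + A (k - 1) = c • A k) (hB : ∀ k, B (k + 1) + B (k - 1) = c • B k)
    (h0 : A 0 = B 0) (h1 : A 1 = B 1) (k : ℤ) : A k = B k := by
  have key : ∀ k : ℤ, A k = B k ∧ A (k + 1) = B (k + 1) := by
    intro k
    induction k using Int.induction_on with
    | zero => exact ⟨h0, by simpa using h1⟩
    | succ k ih =>
      refine ⟨ih.2, ?_⟩
      have a := hA (k + 1)
      have b := hB (k + 1)
      rw [add_sub_cancel_right] at a b
      rw [eq_sub_of_add_eq a, eq_sub_of_add_eq b, ih.1, ih.2]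
    | pred k ih =>
      rw [sub_add_cancel]
      refine ⟨?_, ih.1⟩
      have a := hA (-k)
      have b := hB (-k)
      rw [eq_sub_of_add_eq' a, eq_sub_of_add_eq' b, ih.1, ih.2]
  exact (key k).1

namespace IsPolygonFrame

variable {X : Type*} [NormedAddCommGroup X] [NormedSpace ℝ X]
  {V : ℤ → X} {f : ℤ → X →ₗ[ℝ] ℝ} {c : ℝ}

lemma norm_V (h : IsPolygonFrame V f c) (k : ℤ) : ‖V k‖ = 1 :=
  le_antisymm (h.norm_le k) (h.f_left k ▸ h.f_le k (V k))

lemma f_comb (h : IsPolygonFrame V f c) (k : ℤ) (a b : ℝ) :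
    f k (a • V k + b • V (k + 1)) = a + b := by
  simp [h.f_left, h.f_right]

lemma norm_comb (h : IsPolygonFrame V f c) (k : ℤ) {a b : ℝ} (ha : 0 ≤ a) (hb : 0 ≤ b) :
    ‖a • V k + b • V (k + 1)‖ = a + b := by
  apply le_antisymm
  · refine (norm_add_le _ _).trans ?_
    rw [norm_smul, norm_smul, h.norm_V, h.norm_V, Real.norm_of_nonneg ha, Real.norm_of_nonneg hb]
    simp
  · rw [← h.f_comb k a b]
    exact h.f_le _ _

/-- A vertex of an edge is orthogonal to the direction of that edge, because the functional `f k`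
supports the ball at the vertex and vanishes in that direction. -/
lemma orth_of_f (h : IsPolygonFrame V f c) {k j : ℤ} (hj : f k (V j) = 1) :
    BirkhoffOrth (V j) (V (k + 1) - V k) := by
  intro t
  rw [h.norm_V]
  have := h.f_le k (V j + t • (V (k + 1) - V k))
  simpa [h.f_left, h.f_right, hj] using this

/-- A point in the interior of the cone over edge `k` is smooth, with `f k` as its only norming
functional: it is orthogonal only to vectors in `ker (f k)`. -/
lemma f_eq_zero_of_orth (h : IsPolygonFrame V f c) {k : ℤ} {a b : ℝ} (ha : 0 < a) (hb : 0 < b)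
    {y : X} (hy : BirkhoffOrth (a • V k + b • V (k + 1)) y) : f k y = 0 := by
  obtain ⟨p, q, rfl⟩ := h.span k y
  rw [h.f_comb]
  have hM : 0 < |p| + |q| + 1 := by positivity
  -- this bound on `t` keeps the perturbed point in the cone
  have key : ∀ t : ℝ, |t| * (|p| + |q| + 1) ≤ min a b → 0 ≤ t * (p + q) := by
    intro t ht
    have h1 : |t * p| ≤ min a b := by
      rw [abs_mul]; exact (mul_le_mul_of_nonneg_left (by linarith [abs_nonneg q])
        (abs_nonneg t)).trans ht
    have h2 : |t * q| ≤ min a b := by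
      rw [abs_mul]; exact (mul_le_mul_of_nonneg_left (by linarith [abs_nonneg p])
        (abs_nonneg t)).trans ht
    have h3 : 0 ≤ a + t * p := by linarith [neg_abs_le (t * p), min_le_left a b]
    have h4 : 0 ≤ b + t * q := by linarith [neg_abs_le (t * q), min_le_right a b]
    have h5 := hy t
    have h6 : a • V k + b • V (k + 1) + t • (p • V k + q • V (k + 1))
        = (a + t * p) • V k + (b + t * q) • V (k + 1) := by module
    rw [h6, h.norm_comb k ha.le hb.le, h.norm_comb k h3 h4] at h5
    linarith
  have hs : 0 < min a b / (|p| + |q| + 1) := div_pos (lt_min ha hb) hM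
  have k1 := key (min a b / (|p| + |q| + 1)) (by
    rw [abs_of_pos hs, div_mul_cancel₀ _ hM.ne'])
  have k2 := key (-(min a b / (|p| + |q| + 1))) (by
    rw [abs_neg, abs_of_pos hs, div_mul_cancel₀ _ hM.ne'])
  have k3 : (min a b / (|p| + |q| + 1)) * (p + q) = 0 := by linarith
  exact (mul_eq_zero.1 k3).resolve_left (ne_of_gt hs)

/-- A vector orthogonal to `y` and `y'`, where `y - y'` is a nonzero multiple of that vector, is a
nonnegative multiple of a vertex: inside the cone over edge `k`, it would lie in `ker (f k)`. -/
lemma vertex_of_orth (h : IsPolygonFrame V f c) {u y y' : X} {s : ℝ} (hs : s ≠ 0)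
    (hy : BirkhoffOrth u y) (hy' : BirkhoffOrth u y') (hyy : y - y' = s • u) :
    ∃ j, u = ‖u‖ • V j := by
  obtain ⟨k, a, b, ha, hb, hab⟩ := h.cone u
  have hn := h.norm_comb k ha hb
  rw [← hab] at hn
  rcases ha.eq_or_lt with rfl | ha
  · exact ⟨k + 1, by rw [hn]; simpa using hab⟩
  rcases hb.eq_or_lt with rfl | hb
  · exact ⟨k, by rw [hn]; simpa using hab⟩
  exfalso
  rw [hab] at hy hy'
  have e1 := h.f_eq_zero_of_orth ha hb hy
  have e2 := h.f_eq_zero_of_orth ha hb hy'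
  have e3 : f k (y - y') = f k (s • u) := by rw [hyy]
  have e4 : f k u = a + b := by rw [hab, h.f_comb]
  rw [map_sub, e1, e2, map_smul, e4, smul_eq_mul, sub_zero] at e3
  rcases mul_eq_zero.1 e3.symm with h0 | h0
  · exact hs h0
  · linarith

/-- If `T` carries cones over edges to cones over edges, scaling vertices by `r`, then it scales
the norm by `r`. -/
lemma norm_map_of_vertices (h : IsPolygonFrame V f c) (T : X →L[ℝ] X) {r : ℝ} (hr : 0 ≤ r)
    (hT : ∀ k, ∃ m, T (V k) = r • V m ∧ T (V (k + 1)) = r • V (m + 1) ∨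
      T (V k) = r • V (m + 1) ∧ T (V (k + 1)) = r • V m) (x : X) : ‖T x‖ = r * ‖x‖ := by
  obtain ⟨k, a, b, ha, hb, rfl⟩ := h.cone x
  rw [h.norm_comb k ha hb, map_add, map_smul, map_smul]
  obtain ⟨m, ⟨h1, h2⟩ | ⟨h1, h2⟩⟩ := hT k
  · rw [h1, h2, smul_smul, smul_smul, h.norm_comb m (mul_nonneg ha hr) (mul_nonneg hb hr)]
    ring
  · rw [h1, h2, smul_smul, smul_smul, add_comm (_ • _),
      h.norm_comb m (mul_nonneg hb hr) (mul_nonneg ha hr)]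
    ring

/-- The orthogonality argument: `T` preserves orthogonality at two consecutive vertices, hence
scales the norm by a constant. -/
theorem exists_norm_map (h : IsPolygonFrame V f c) (T : X →L[ℝ] X) (i : ℤ)
    (hp1 : ∀ y, BirkhoffOrth (V i) y → BirkhoffOrth (T (V i)) (T y))
    (hp2 : ∀ y, BirkhoffOrth (V (i + 1)) y → BirkhoffOrth (T (V (i + 1))) (T y)) :
    ∃ r : ℝ, 0 ≤ r ∧ ∀ x, ‖T x‖ = r * ‖x‖ := by
  have o1 := hp1 _ (h.orth_of_f (h.f_left i))
  have o2 := hp2 _ (h.orth_of_f (h.f_right i))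
  have o1' := hp1 (V i - V (i - 1)) (by
    have := h.orth_of_f (k := i - 1) (j := i) (by simpa using h.f_right (i - 1))
    simpa using this)
  have o2' := hp2 _ (h.orth_of_f (h.f_left (i + 1)))
  have r1 : T (V (i + 1) - V i) - T (V i - V (i - 1)) = (c - 2) • T (V i) := by
    rw [← map_sub, ← map_smul, sub_smul, ← h.recur i]
    congr 1; module
  have r2 : T (V (i + 1 + 1) - V (i + 1)) - T (V (i + 1) - V i) = (c - 2) • T (V (i + 1)) := by
    have := h.recur (i + 1)
    rw [add_sub_cancel_right] at this
    rw [← map_sub, ← map_smul, sub_smul, ← this]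
    congr 1; module
  have hc : c - 2 ≠ 0 := sub_ne_zero.2 h.c_ne
  rw [map_sub] at o1 o2 r1 r2
  have hPQ : ‖T (V i)‖ = ‖T (V (i + 1))‖ := by
    apply le_antisymm
    · simpa using o1 1
    · simpa using o2 (-1)
  have hmid := o1 (1 / 2)
  set P := T (V i) with hP
  set Q := T (V (i + 1)) with hQ
  set r := ‖P‖ with hr
  refine ⟨r, norm_nonneg _, ?_⟩
  by_cases hP0 : P = 0
  · have hr0 : r = 0 := by rw [hr, hP0, norm_zero]
    have hQ0 : Q = 0 := by rw [← norm_eq_zero, ← hPQ, hr0]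
    intro x
    obtain ⟨a, b, rfl⟩ := h.span i x
    rw [map_add, map_smul, map_smul, ← hP, ← hQ, hP0, hQ0, hr0]
    simp
  have hrpos : 0 < r := norm_pos_iff.2 hP0
  obtain ⟨j, hj⟩ := h.vertex_of_orth hc o1 o1' r1
  obtain ⟨l, hl⟩ := h.vertex_of_orth hc (by simpa using o2') o2 (by simpa using r2)
  rw [← hr] at hj
  rw [← hPQ] at hl
  have hne : P ≠ Q := by
    intro hE
    rw [← hE, sub_self, zero_sub] at r1
    have h1 := o1' (c - 2)⁻¹
    rw [neg_eq_iff_eq_neg.1 r1, smul_neg, smul_smul, inv_mul_cancel₀ hc, one_smul,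
      add_neg_cancel, norm_zero] at h1
    exact absurd h1 (not_le.2 hrpos)
  -- the edge on which the midpoint of `[P, Q]` lies
  obtain ⟨m, a, b, ha, hb, hab⟩ := h.cone (P + (1 / 2 : ℝ) • (Q - P))
  have hfm : r ≤ f m (P + (1 / 2 : ℝ) • (Q - P)) := by
    rw [hab, h.f_comb, ← h.norm_comb m ha hb, ← hab]; exact hmid
  have fP : f m P ≤ r := h.f_le m P
  have fQ : f m Q ≤ r := hPQ ▸ h.f_le m Q
  rw [map_add, map_smul, map_sub, smul_eq_mul] at hfm
  have fP' : f m P = r := by linarith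
  have fQ' : f m Q = r := by linarith
  have hjm : f m (V j) = 1 := by
    rw [hj, map_smul, smul_eq_mul] at fP'
    exact mul_left_cancel₀ hrpos.ne' (by rw [fP', mul_one])
  have hlm : f m (V l) = 1 := by
    rw [hl, map_smul, smul_eq_mul] at fQ'
    exact mul_left_cancel₀ hrpos.ne' (by rw [fQ', mul_one])
  have recT : ∀ k, T (V (i + (k + 1))) + T (V (i + (k - 1))) = c • T (V (i + k)) := by
    intro k
    rw [← map_add, ← map_smul, ← h.recur (i + k), add_assoc, add_sub_assoc]
  have finish_shift : P = r • V m → Q = r • V (m + 1) → ∀ x, ‖T x‖ = r * ‖x‖ := by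
    intro hPm hQm
    have key := eq_of_recur (A := fun k => T (V (i + k))) (B := fun k => r • V (m + k)) recT
      (fun k => by
        rw [← smul_add, ← add_assoc, ← add_sub_assoc, h.recur, smul_comm])
      (by simpa using hPm) hQm
    refine h.norm_map_of_vertices T hrpos.le fun k => ⟨m + (k - i), Or.inl ⟨?_, ?_⟩⟩
    · simpa using key (k - i)
    · have := key (k - i + 1)
      rwa [← add_assoc, ← add_assoc, add_sub_cancel] at this
  have finish_refl : P = r • V (m + 1) → Q = r • V m → ∀ x, ‖T x‖ = r * ‖x‖ := by
    intro hPm hQm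
    have key := eq_of_recur (A := fun k => T (V (i + k))) (B := fun k => r • V (m + 1 - k)) recT
      (fun k => by
        rw [← smul_add, smul_comm c, ← h.recur (m + 1 - k), add_comm (V _),
          show m + 1 - (k + 1) = m + 1 - k - 1 by ring,
          show m + 1 - (k - 1) = m + 1 - k + 1 by ring])
      (by simpa using hPm) (by simpa using hQm)
    refine h.norm_map_of_vertices T hrpos.le fun k => ⟨m - (k - i), Or.inr ⟨?_, ?_⟩⟩
    · have := key (k - i)
      rw [add_sub_cancel] at this
      rw [this]; congr 2; ring
    · have := key (k - i + 1)
      rw [← add_assoc, add_sub_cancel] at this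
      rw [this]; congr 2; ring
  rcases h.face m j hjm with e1 | e1 <;> rcases h.face m l hlm with e2 | e2 <;>
    rw [e1] at hj <;> rw [e2] at hl
  · exact absurd (hj.trans hl.symm) hne
  · exact finish_shift hj hl
  · exact finish_refl hj hl
  · exact absurd (hj.trans hl.symm) hne

end IsPolygonFrame

/-! ### The regular polygon -/

/-- Every vertex of the polygon lies on the inner side of the line through every edge: `l` is the
difference of the indices of the vertex and the edge.
The difference of the two sides is a product of the sines of two adjacent multiples of `π / (2 n)`,
which have the same sign. -/
lemma cos_edge_le {n : ℕ} (hn : 0 < n) (l : ℤ) :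
    cos ((l - 1 / 2) * (π / n)) ≤ cos (π / n / 2) := by
  have hn' : (0 : ℝ) < n := by exact_mod_cast hn
  have h1 : cos (π / n / 2) - cos ((l - 1 / 2) * (π / n))
      = 2 * (sin (l * (π / n) / 2) * sin ((l - 1) * (π / n) / 2)) := by
    rw [Real.cos_sub_cos]
    have e1 : (π / n / 2 + (l - 1 / 2) * (π / n)) / 2 = l * (π / n) / 2 := by ring
    have e2 : (π / n / 2 - (l - 1 / 2) * (π / n)) / 2 = -((l - 1) * (π / n) / 2) := by ring
    rw [e1, e2, sin_neg]; ring
  have h2 : 0 ≤ sin (l * (π / n) / 2) * sin ((l - 1) * (π / n) / 2) := by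
    obtain ⟨q, s, hs0, hs1, hl⟩ : ∃ q s : ℤ, 0 ≤ s ∧ s < 2 * n ∧ l = s + 1 + 2 * n * q :=
      ⟨(l - 1) / (2 * n), (l - 1) % (2 * n), Int.emod_nonneg _ (by omega),
        Int.emod_lt_of_pos _ (by omega), by linarith [Int.emod_add_mul_ediv (l - 1) (2 * n)]⟩
    have hs0' : (0 : ℝ) ≤ s := by exact_mod_cast hs0
    have hs1' : (s : ℝ) + 1 ≤ 2 * n := by exact_mod_cast hs1
    have e1 : (l : ℝ) * (π / n) / 2 = (s + 1) * (π / n) / 2 + q * π := by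
      rw [hl]; push_cast; field_simp
    have e2 : ((l : ℝ) - 1) * (π / n) / 2 = s * (π / n) / 2 + q * π := by
      rw [hl]; push_cast; field_simp; ring
    have b : ∀ z : ℝ, 0 ≤ z → z ≤ 2 * n → 0 ≤ sin (z * (π / n) / 2) := fun z h0 h1 =>
      sin_nonneg_of_nonneg_of_le_pi (by positivity) (by
        have : z * (π / n) / 2 = z / (2 * n) * π := by field_simp
        rw [this]
        exact mul_le_of_le_one_left pi_pos.le ((div_le_one (by positivity)).2 h1))
    rw [e1, e2, sin_add_int_mul_pi, sin_add_int_mul_pi]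
    have b1 := b (s + 1) (by linarith) hs1'
    have b2 := b s hs0' (by linarith)
    have sq : ((-1 : ℝ) ^ q) * ((-1) ^ q) = 1 := by
      rw [← mul_zpow]; simp
    calc (0 : ℝ) ≤ sin ((s + 1) * (π / n) / 2) * sin (s * (π / n) / 2) := mul_nonneg b1 b2
      _ = (((-1 : ℝ) ^ q) * ((-1) ^ q)) *
          (sin ((s + 1) * (π / n) / 2) * sin (s * (π / n) / 2)) := by rw [sq, one_mul]
      _ = _ := by ring
  linarith

/-- The vertex of angle `k θ`, in the coordinates given by `e`. -/
noncomputable def polyVertex {X : Type*} [AddCommGroup X] [Module ℝ X] (e : X ≃ₗ[ℝ] ℝ × ℝ) (θ : ℝ)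
    (k : ℤ) : X :=
  e.symm (cos (k * θ), sin (k * θ))

/-- The functional equal to `1` on the line through the vertices of angles `k θ` and
`(k + 1) θ` (provided `cos (θ / 2) ≠ 0`). -/
noncomputable def polyFunctional {X : Type*} [AddCommGroup X] [Module ℝ X] (e : X ≃ₗ[ℝ] ℝ × ℝ)
    (θ : ℝ) (k : ℤ) : X →ₗ[ℝ] ℝ :=
  (cos (θ / 2))⁻¹ • ((cos ((k + 1 / 2) * θ) • LinearMap.fst ℝ ℝ ℝ +
    sin ((k + 1 / 2) * θ) • LinearMap.snd ℝ ℝ ℝ) ∘ₗ e.toLinearMap)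

lemma polyFunctional_vertex {X : Type*} [AddCommGroup X] [Module ℝ X] (e : X ≃ₗ[ℝ] ℝ × ℝ)
    (θ : ℝ) (k j : ℤ) :
    polyFunctional e θ k (polyVertex e θ j) =
      (cos (θ / 2))⁻¹ * cos (((j - k : ℤ) - 1 / 2) * θ) := by
  have : (((j - k : ℤ) : ℝ) - 1 / 2) * θ = j * θ - (k + 1 / 2) * θ := by push_cast; ring
  rw [this, cos_sub]
  simp only [polyFunctional, polyVertex, LinearMap.smul_apply, LinearMap.comp_apply,
    LinearMap.add_apply, LinearMap.fst_apply, LinearMap.snd_apply, LinearEquiv.coe_coe,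
    LinearEquiv.apply_symm_apply, smul_eq_mul]
  ring

/-- Vertices whose angles differ by a multiple of `2 π` coincide. -/
lemma polyVertex_congr {X : Type*} [AddCommGroup X] [Module ℝ X] (e : X ≃ₗ[ℝ] ℝ × ℝ)
    {θ : ℝ} {j m q : ℤ} (h : (j : ℝ) * θ = m * θ + q * (2 * π)) :
    polyVertex e θ j = polyVertex e θ m := by
  rw [polyVertex, polyVertex, h, cos_add_int_mul_two_pi, sin_add_int_mul_two_pi]

/-- If the unit ball is the hull of the vertices, then the vertices and edge functionals form a
polygon frame. -/
theorem isPolygonFrame {X : Type*} [NormedAddCommGroup X] [NormedSpace ℝ X]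
    {n : ℕ} (hn : 2 ≤ n) (e : X ≃ₗ[ℝ] ℝ × ℝ)
    (hball : Metric.closedBall (0 : X) 1 = convexHull ℝ (Set.range (polyVertex e (π / n)))) :
    IsPolygonFrame (polyVertex e (π / n)) (polyFunctional e (π / n)) (2 * cos (π / n)) := by
  have hn' : (2 : ℝ) ≤ n := by exact_mod_cast hn
  have hθ0 : 0 < π / n := by positivity
  have hθ1 : π / n ≤ π / 2 := by gcongr
  have hedge := cos_edge_le (n := n) (by omega)
  set θ := π / n with hθ
  have hpi := pi_pos
  have hcos : 0 < cos (θ / 2) := cos_pos_of_mem_Ioo ⟨by linarith, by linarith⟩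
  have hsin : 0 < sin θ := sin_pos_of_pos_of_lt_pi hθ0 (by linarith)
  have hfle : ∀ k j, polyFunctional e θ k (polyVertex e θ j) ≤ 1 := by
    intro k j
    rw [polyFunctional_vertex, inv_mul_le_iff₀ hcos, mul_one]
    exact hedge _
  refine ⟨?_, ?_, ?_, ?_, ?_, ?_, ?_, ?_, ?_⟩
  · intro hc
    have := sin_sq_add_cos_sq θ
    have h1 : cos θ = 1 := by linarith
    rw [h1] at this
    nlinarith
  · intro k
    rw [polyVertex, polyVertex, polyVertex, ← map_add, ← map_smul]
    congr 1
    have e1 : ((k + 1 : ℤ) : ℝ) * θ = k * θ + θ := by push_cast; ring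
    have e2 : ((k - 1 : ℤ) : ℝ) * θ = k * θ - θ := by push_cast; ring
    rw [e1, e2, cos_add, cos_sub, sin_add, sin_sub]
    ext <;> simp <;> ring
  · intro k
    rw [polyFunctional_vertex, inv_mul_eq_one₀ hcos.ne', ← cos_neg]
    congr 1; push_cast; ring
  · intro k
    rw [polyFunctional_vertex, inv_mul_eq_one₀ hcos.ne']
    congr 1; push_cast; ring
  · intro k x
    have hsub : convexHull ℝ (Set.range (polyVertex e θ)) ⊆ {x | polyFunctional e θ k x ≤ 1} :=
      convexHull_min (by rintro _ ⟨j, rfl⟩; exact hfle k j)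
        (convex_halfSpace_le (polyFunctional e θ k).isLinear 1)
    rw [← hball] at hsub
    rcases eq_or_ne x 0 with rfl | hx
    · simp
    have hx' := norm_pos_iff.2 hx
    have h1 : polyFunctional e θ k (‖x‖⁻¹ • x) ≤ 1 := hsub (by
      rw [mem_closedBall_zero_iff, norm_smul, norm_inv, norm_norm, inv_mul_cancel₀ hx'.ne'])
    rwa [map_smul, smul_eq_mul, inv_mul_le_iff₀ hx', mul_one] at h1
  · intro k
    rw [← mem_closedBall_zero_iff, hball]
    exact subset_convexHull ℝ _ ⟨k, rfl⟩
  · intro k x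
    -- the Cramer formulas for the basis `V k, V (k + 1)`, whose determinant is `sin θ`
    refine ⟨((e x).1 * sin (k * θ + θ) - (e x).2 * cos (k * θ + θ)) / sin θ,
      ((e x).2 * cos (k * θ) - (e x).1 * sin (k * θ)) / sin θ, ?_⟩
    have e1 : ((k + 1 : ℤ) : ℝ) * θ = k * θ + θ := by push_cast; ring
    have sq := sin_sq_add_cos_sq (k * θ)
    apply e.injective
    rw [polyVertex, polyVertex, e1, map_add, map_smul, map_smul, e.apply_symm_apply,
      e.apply_symm_apply, cos_add, sin_add]
    ext
    · simp only [Prod.fst_add, Prod.smul_fst, smul_eq_mul]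
      field_simp
      linear_combination (-(e x).1 * sin θ) * sq
    · simp only [Prod.snd_add, Prod.smul_snd, smul_eq_mul]
      field_simp
      linear_combination (-(e x).2 * sin θ) * sq
  · intro x
    -- polar coordinates, the argument being split as `k θ + ψ` with `0 ≤ ψ < θ`
    obtain ⟨ρ, φ, hρ, hx1, hx2⟩ : ∃ ρ φ : ℝ, 0 ≤ ρ ∧ (e x).1 = ρ * cos φ ∧ (e x).2 = ρ * sin φ :=
      ⟨‖(⟨(e x).1, (e x).2⟩ : ℂ)‖, Complex.arg ⟨(e x).1, (e x).2⟩, norm_nonneg _,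
        (Complex.norm_mul_cos_arg ⟨(e x).1, (e x).2⟩).symm,
        (Complex.norm_mul_sin_arg ⟨(e x).1, (e x).2⟩).symm⟩
    obtain ⟨k, ψ, hψ0, hψ1, hφ⟩ : ∃ (k : ℤ) (ψ : ℝ), 0 ≤ ψ ∧ ψ ≤ θ ∧ φ = k * θ + ψ :=
      ⟨⌊φ / θ⌋, φ - ⌊φ / θ⌋ * θ, by
        have := (le_div_iff₀ hθ0).1 (Int.floor_le (φ / θ)); linarith, by
        have := (div_lt_iff₀ hθ0).1 (Int.lt_floor_add_one (φ / θ)); linarith, by ring⟩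
    refine ⟨k, ρ * sin (θ - ψ) / sin θ, ρ * sin ψ / sin θ, ?_, ?_, ?_⟩
    · exact div_nonneg (mul_nonneg hρ
        (sin_nonneg_of_nonneg_of_le_pi (by linarith) (by linarith))) hsin.le
    · exact div_nonneg (mul_nonneg hρ
        (sin_nonneg_of_nonneg_of_le_pi (by linarith) (by linarith))) hsin.le
    have e1 : ((k + 1 : ℤ) : ℝ) * θ = k * θ + θ := by push_cast; ring
    apply e.injective
    rw [polyVertex, polyVertex, e1, map_add, map_smul, map_smul, e.apply_symm_apply,
      e.apply_symm_apply, cos_add, sin_add, sin_sub]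
    ext
    · simp only [Prod.fst_add, Prod.smul_fst, smul_eq_mul]
      rw [hx1, hφ, cos_add]
      field_simp
      ring
    · simp only [Prod.snd_add, Prod.smul_snd, smul_eq_mul]
      rw [hx2, hφ, sin_add]
      field_simp
      ring
  · intro m j hmj
    rw [polyFunctional_vertex, inv_mul_eq_one₀ hcos.ne', cos_eq_cos_iff] at hmj
    obtain ⟨q, hq | hq⟩ := hmj
    · right
      refine polyVertex_congr e (q := q) ?_
      push_cast at hq ⊢
      linarith
    · left
      refine polyVertex_congr e (q := q) ?_
      push_cast at hq ⊢
      linarith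

theorem stmt15 {X : Type*} [NormedAddCommGroup X] [NormedSpace ℝ X]
    {n : ℕ} (e : X ≃ₗ[ℝ] ℝ × ℝ)
    (v : Fin (2 * n) → X)
    (hv : ∀ j : Fin (2 * n),
      v j = e.symm (Real.cos ((j : ℕ) * π / n), Real.sin ((j : ℕ) * π / n)))
    (hball : Metric.closedBall (0 : X) 1 = convexHull ℝ (Set.range v))
    (T : X →L[ℝ] X) (i : Fin (2 * n))
    (hp1 : ∀ y : X, BirkhoffOrth (v i) y → BirkhoffOrth (T (v i)) (T y))
    (hp2 : ∀ y : X, BirkhoffOrth (v ⟨((i : ℕ) + 1) % (2 * n), Nat.mod_lt _ i.pos⟩) y → BirkhoffOrth (T (v ⟨((i : ℕ) + 1) % (2 * n), Nat.mod_lt _ i.pos⟩)) (T y)) :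
    ∃ c : ℝ, 0 ≤ c ∧ ∀ x : X, ‖T x‖ = c * ‖x‖ := by
  have hi := i.pos
  have hn0 : 0 < n := by omega
  have hn0' : (0 : ℝ) < n := by exact_mod_cast hn0
  have hmod : ∀ j : ℤ, polyVertex e (π / n) (j % (2 * n : ℕ)) = polyVertex e (π / n) j := by
    intro j
    refine polyVertex_congr e (q := -(j / (2 * n : ℕ))) ?_
    have h1 : (j : ℝ) = (j % (2 * n : ℕ) : ℤ) + (2 * n) * (j / (2 * n : ℕ) : ℤ) := by
      exact_mod_cast (Int.emod_add_mul_ediv j (2 * n : ℕ)).symm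
    rw [h1, Int.cast_neg]
    field_simp
    ring
  have hvV : ∀ j : Fin (2 * n), v j = polyVertex e (π / n) (j : ℕ) := by
    intro j
    rw [hv, polyVertex, Int.cast_natCast, mul_div_assoc]
  have hrange : Set.range v = Set.range (polyVertex e (π / n)) := by
    ext x
    constructor
    · rintro ⟨j, rfl⟩
      exact ⟨(j : ℕ), (hvV j).symm⟩
    · rintro ⟨j, rfl⟩
      have h0 : 0 ≤ j % (2 * n : ℕ) := Int.emod_nonneg _ (by omega)
      have h1 : j % (2 * n : ℕ) < (2 * n : ℕ) := Int.emod_lt_of_pos _ (by omega)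
      refine ⟨⟨(j % (2 * n : ℕ)).toNat, by omega⟩, ?_⟩
      rw [hvV, ← hmod j]
      congr 1
      exact Int.toNat_of_nonneg h0
  rw [hrange] at hball
  have hn : 2 ≤ n := by
    -- for `n = 1` the hull is a segment, so it cannot be the ball of a plane
    by_contra hlt
    obtain rfl : n = 1 := by omega
    have hsub : convexHull ℝ (Set.range (polyVertex e (π / (1 : ℕ)))) ⊆
        ((LinearMap.ker (LinearMap.snd ℝ ℝ ℝ ∘ₗ e.toLinearMap) : Submodule ℝ X) : Set X) :=
      convexHull_min (by
        rintro _ ⟨j, rfl⟩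
        simp [polyVertex, sin_int_mul_pi]) (Submodule.convex _)
    rw [← hball] at hsub
    have hx : e.symm (0, 1) ≠ 0 := by simp
    have hx' := norm_pos_iff.2 hx
    have h1 := hsub (a := ‖e.symm (0, 1)‖⁻¹ • e.symm (0, 1)) (by
      rw [mem_closedBall_zero_iff, norm_smul, norm_inv, norm_norm, inv_mul_cancel₀ hx'.ne'])
    simp at h1
  have hsucc : v ⟨((i : ℕ) + 1) % (2 * n), Nat.mod_lt _ i.pos⟩ =
      polyVertex e (π / n) ((i : ℕ) + 1) := by
    rw [hvV, ← hmod ((i : ℕ) + 1)]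
    congr 1
  rw [hsucc] at hp2
  rw [hvV] at hp1
  exact (isPolygonFrame hn e hball).exists_norm_map T _ hp1 hp2
end
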